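/- Let (T, Λ) be a cookie cutter system and let δ be the Hausdorff dimension of Λ. Then the series Σ_{n=1}^∞ Σ_i |I_n^i|^σ, where for each n the inner sum runs over all n-th level basic sets, converges for every real σ > δ and diverges for every real σ < δ; that is, the abscissa of convergence of Σ_{n=1}^∞ Σ_i |I_n^i|^s equals the Hausdorff dimension of Λ. -/

import Mathlib

/-!
The inverse branches of `T` compose to maps `f_w`, indexed by finite words `w`, whose images of `[0,1]`
(the cylinders) are exactly the basic sets; so the series runs over all nonempty words.

If the series converges at `σ ≥ 0`, the covers of `Λ` by cylinders of length `n` have bounded `σ`-sums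
and mesh at most `λ⁻ⁿ`, so the `σ`-dimensional Hausdorff measure of `Λ` is finite and `dim_H Λ ≤ σ`
(`dimH_le_of_summable`). For `σ ≤ 0` infinitely many terms are at least `1`.

For `σ > dim_H Λ` the Hausdorff measure vanishes. Iterating the mean value theorem and summing the
Hölder errors along a geometric series gives bounded distortion of `f_w` (`wordMap_distortion`). It
has two consequences. The `σ`-th powers of the sizes, suitably normalised, are submultiplicative under
concatenation of words. And since distinct children of a cylinder are separated by a fixed proportion
of its size, any set meeting `Λ` in at least two points can be replaced by a single cylinder of
comparable diameter (`exists_covering_word`). Hence `Λ` has a cover by cylinders of total weight at most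
`1/2`, which compactness makes finite (`exists_finite_cut`). Every long word then factors as a member of
this family followed by another word, and submultiplicativity gives `Z ≤ const + Z / 2` for the
partial sums `Z`, which are therefore bounded (`summable_of_cut`).
-/

open MeasureTheory Set

/-- A cookie cutter system: `k ≥ 2` pairwise disjoint closed intervals
`[u j, v j] ⊆ [0,1]`, each mapped bijectively onto `[0,1]` by `T`, with
`T` differentiable with `ε`-Hölder derivative `T'` satisfying `|T'| ≥ lam > 1`. -/
structure CookieCutter where
  k : ℕ
  two_le_k : 2 ≤ k
  u : Fin k → ℝ
  v : Fin k → ℝ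
  T : ℝ → ℝ
  T' : ℝ → ℝ
  lam : ℝ
  eps : ℝ
  Ceps : ℝ
  nondeg : ∀ j, u j < v j
  subset_unit : ∀ j, Icc (u j) (v j) ⊆ Icc (0:ℝ) 1
  pair_disj : Pairwise fun i j => Disjoint (Icc (u i) (v i)) (Icc (u j) (v j))
  bijOn : ∀ j, BijOn T (Icc (u j) (v j)) (Icc (0:ℝ) 1)
  hasDeriv : ∀ x ∈ ⋃ j, Icc (u j) (v j),
    HasDerivWithinAt T (T' x) (⋃ j, Icc (u j) (v j)) x
  eps_pos : 0 < eps
  Ceps_nonneg : 0 ≤ Ceps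
  holder : ∀ x ∈ ⋃ j, Icc (u j) (v j), ∀ y ∈ ⋃ j, Icc (u j) (v j),
    |T' x - T' y| ≤ Ceps * |x - y| ^ eps
  one_lt_lam : 1 < lam
  expanding : ∀ x ∈ ⋃ j, Icc (u j) (v j), lam ≤ |T' x|

/-- The length of a (bounded) interval `I ⊆ ℝ`. -/
noncomputable def setLen (I : Set ℝ) : ℝ := sSup I - sInf I

namespace CookieCutter

variable (S : CookieCutter)

/-- The domain `I_1 ∪ ⋯ ∪ I_k` of the cookie cutter map. -/
def domain : Set ℝ := ⋃ j, Icc (S.u j) (S.v j)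

/-- The set `T^{-n}([0,1])`: points whose first `n` iterates stay in the domain. -/
def level (n : ℕ) : Set ℝ := {x | ∀ m < n, S.T^[m] x ∈ S.domain}

/-- `I` is an `n`-th level basic set, i.e. a connected component of `T^{-n}([0,1])`. -/
def IsBasic (n : ℕ) (I : Set ℝ) : Prop :=
  ∃ x ∈ S.level n, I = connectedComponentIn (S.level n) x

/-- The repeller `Λ = ⋂_{n ≥ 0} T^{-n}([0,1])`. -/
def repeller : Set ℝ := {x | ∀ n, S.T^[n] x ∈ S.domain}

/-- The function `φ = - log |T'|`. -/
noncomputable def phi (x : ℝ) : ℝ := - Real.log |S.T' x|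

/-- The Birkhoff sum `fⁿ(x) = Σ_{j<n} f(T^j x)`. -/
noncomputable def birkhoff (f : ℝ → ℝ) (n : ℕ) (x : ℝ) : ℝ :=
  ∑ j ∈ Finset.range n, f (S.T^[j] x)

/-- `f` is Hölder continuous on the set `A`. -/
def IsHolderOn (f : ℝ → ℝ) (A : Set ℝ) : Prop :=
  ∃ β C : ℝ, 0 < β ∧ β ≤ 1 ∧ 0 ≤ C ∧ ∀ x ∈ A, ∀ y ∈ A, |f x - f y| ≤ C * |x - y| ^ β

/-- `μ` is a normalized Gibbs measure for the potential `ψ`: a Borel probability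
measure on the repeller with `C ≤ μ(I_n^i)/e^{ψⁿ(x)} ≤ D` for every basic set. -/
def IsGibbs (ψ : ℝ → ℝ) (μ : Measure ℝ) : Prop :=
  IsProbabilityMeasure μ ∧ μ S.repellerᶜ = 0 ∧
    ∃ C D : ℝ, 0 < C ∧ 0 < D ∧
      ∀ n, 1 ≤ n → ∀ I, S.IsBasic n I → ∀ x ∈ I ∩ S.repeller,
        C * Real.exp (S.birkhoff ψ n x) ≤ (μ I).toReal ∧
          (μ I).toReal ≤ D * Real.exp (S.birkhoff ψ n x)

/-- `ν` is a `T`-invariant Borel probability measure on the repeller. -/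
def IsInvariantProb (ν : Measure ℝ) : Prop :=
  IsProbabilityMeasure ν ∧ ν S.repellerᶜ = 0 ∧
    ∀ A, MeasurableSet A → ν (S.T ⁻¹' A) = ν A

end CookieCutter

namespace CookieCutter

variable (S : CookieCutter)

/-! ### Inverse branches and cylinders -/

/-- The inverse branch of `T` onto the `j`-th interval; meaningful only on `[0,1]`, outside of which
`Function.invFunOn` takes junk values. -/
noncomputable def branch (j : Fin S.k) : ℝ → ℝ :=
  Function.invFunOn S.T (Icc (S.u j) (S.v j))

/-- The composition `f_{w₁} ∘ ⋯ ∘ f_{wₙ}` of inverse branches along the word `w`. -/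
noncomputable def wordMap (w : List (Fin S.k)) (x : ℝ) : ℝ := w.foldr S.branch x

/-- The cylinder of a word: the interval of points of `[0,1]` whose `T`-itinerary starts with `w`. -/
def cyl (w : List (Fin S.k)) : Set ℝ := S.wordMap w '' Icc 0 1

lemma wordMap_nil (x : ℝ) : S.wordMap [] x = x := rfl

lemma wordMap_cons (j : Fin S.k) (w : List (Fin S.k)) (x : ℝ) :
    S.wordMap (j :: w) x = S.branch j (S.wordMap w x) := rfl

lemma wordMap_append (w v : List (Fin S.k)) (x : ℝ) :
    S.wordMap (w ++ v) x = S.wordMap w (S.wordMap v x) := by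
  simp [wordMap, List.foldr_append]

lemma branch_mem (j : Fin S.k) {x : ℝ} (hx : x ∈ Icc (0 : ℝ) 1) :
    S.branch j x ∈ Icc (S.u j) (S.v j) :=
  Function.invFunOn_mem ((S.bijOn j).surjOn hx)

lemma T_branch (j : Fin S.k) {x : ℝ} (hx : x ∈ Icc (0 : ℝ) 1) :
    S.T (S.branch j x) = x :=
  Function.invFunOn_eq ((S.bijOn j).surjOn hx)

lemma branch_T (j : Fin S.k) {x : ℝ} (hx : x ∈ Icc (S.u j) (S.v j)) :
    S.branch j (S.T x) = x :=
  (S.bijOn j).injOn.leftInvOn_invFunOn hx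

lemma T_mem {j : Fin S.k} {x : ℝ} (hx : x ∈ Icc (S.u j) (S.v j)) : S.T x ∈ Icc (0 : ℝ) 1 :=
  (S.bijOn j).mapsTo hx

lemma lam_pos : 0 < S.lam := by linarith [S.one_lt_lam]

/-- The mean value theorem for `T` on one interval of the domain. -/
lemma T_mvt (j : Fin S.k) {x y : ℝ} (hx : x ∈ Icc (S.u j) (S.v j))
    (hy : y ∈ Icc (S.u j) (S.v j)) :
    ∃ c ∈ uIcc x y, S.T x - S.T y = S.T' c * (x - y) := by
  wlog h : y ≤ x generalizing x y
  · obtain ⟨c, hc, h⟩ := this hy hx (le_of_not_ge h)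
    exact ⟨c, uIcc_comm y x ▸ hc, by linarith⟩
  rcases h.eq_or_lt with rfl | h
  · exact ⟨y, by simp, by simp⟩
  have hsub : Icc y x ⊆ Icc (S.u j) (S.v j) := Icc_subset_Icc hy.1 hx.2
  have hd : ∀ z ∈ Icc y x, HasDerivWithinAt S.T (S.T' z) (Icc y x) z := fun z hz =>
    (S.hasDeriv z (mem_iUnion.2 ⟨j, hsub hz⟩)).mono
      (hsub.trans (subset_iUnion (fun j => Icc (S.u j) (S.v j)) j))
  obtain ⟨c, hc, he⟩ := exists_hasDerivAt_eq_slope S.T S.T' h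
    (fun z hz => (hd z hz).continuousWithinAt)
    (fun z hz => (hd z (Ioo_subset_Icc_self hz)).hasDerivAt (Icc_mem_nhds hz.1 hz.2))
  refine ⟨c, uIcc_comm y x ▸ (uIcc_of_le h.le).symm ▸ Ioo_subset_Icc_self hc, ?_⟩
  rw [he]
  field_simp [sub_ne_zero.2 h.ne']

lemma branch_lip (j : Fin S.k) {x y : ℝ} (hx : x ∈ Icc (0 : ℝ) 1) (hy : y ∈ Icc (0 : ℝ) 1) :
    |S.branch j x - S.branch j y| ≤ S.lam⁻¹ * |x - y| := by
  have hX := S.branch_mem j hx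
  have hY := S.branch_mem j hy
  obtain ⟨c, hc, h⟩ := S.T_mvt j hX hY
  rw [S.T_branch j hx, S.T_branch j hy] at h
  have hcI : c ∈ Icc (S.u j) (S.v j) := OrdConnected.uIcc_subset ordConnected_Icc hX hY hc
  have := S.expanding c (mem_iUnion.2 ⟨j, hcI⟩)
  rw [h, abs_mul, inv_mul_eq_div, le_div_iff₀ S.lam_pos, mul_comm]
  gcongr

lemma wordMap_mem (w : List (Fin S.k)) {x : ℝ} (hx : x ∈ Icc (0 : ℝ) 1) :
    S.wordMap w x ∈ Icc (0 : ℝ) 1 := by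
  induction w with
  | nil => exact hx
  | cons j w ih => exact S.subset_unit j (S.branch_mem j ih)

lemma wordMap_lip (w : List (Fin S.k)) {x y : ℝ} (hx : x ∈ Icc (0 : ℝ) 1)
    (hy : y ∈ Icc (0 : ℝ) 1) :
    |S.wordMap w x - S.wordMap w y| ≤ S.lam⁻¹ ^ w.length * |x - y| := by
  induction w with
  | nil => simp [wordMap_nil]
  | cons j w ih =>
    calc _ ≤ S.lam⁻¹ * |S.wordMap w x - S.wordMap w y| :=
          S.branch_lip j (S.wordMap_mem w hx) (S.wordMap_mem w hy)
      _ ≤ S.lam⁻¹ * (S.lam⁻¹ ^ w.length * |x - y|) := by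
          have := S.lam_pos
          gcongr
      _ = _ := by rw [List.length_cons]; ring

lemma wordMap_continuousOn (w : List (Fin S.k)) : ContinuousOn (S.wordMap w) (Icc 0 1) := by
  have h0 : 0 ≤ S.lam⁻¹ ^ w.length := by have := S.lam_pos; positivity
  have : LipschitzOnWith ⟨_, h0⟩ (S.wordMap w) (Icc 0 1) :=
    LipschitzOnWith.of_dist_le_mul fun x hx y hy => S.wordMap_lip w hx hy
  exact this.continuousOn

lemma isCompact_cyl (w : List (Fin S.k)) : IsCompact (S.cyl w) :=
  isCompact_Icc.image_of_continuousOn (S.wordMap_continuousOn w)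

lemma isPreconnected_cyl (w : List (Fin S.k)) : IsPreconnected (S.cyl w) :=
  isPreconnected_Icc.image _ (S.wordMap_continuousOn w)

lemma cyl_nonempty (w : List (Fin S.k)) : (S.cyl w).Nonempty :=
  (nonempty_Icc.2 zero_le_one).image _

lemma cyl_subset_unit (w : List (Fin S.k)) : S.cyl w ⊆ Icc 0 1 := by
  rintro _ ⟨x, hx, rfl⟩
  exact S.wordMap_mem w hx

lemma mem_cyl_cons {j : Fin S.k} {w : List (Fin S.k)} {x : ℝ} :
    x ∈ S.cyl (j :: w) ↔ x ∈ Icc (S.u j) (S.v j) ∧ S.T x ∈ S.cyl w := by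
  constructor
  · rintro ⟨a, ha, rfl⟩
    rw [wordMap_cons]
    exact ⟨S.branch_mem j (S.wordMap_mem w ha),
      by rw [S.T_branch j (S.wordMap_mem w ha)]; exact ⟨a, ha, rfl⟩⟩
  · rintro ⟨hx, a, ha, h⟩
    exact ⟨a, ha, by rw [wordMap_cons, h, S.branch_T j hx]⟩

lemma mem_cyl_nil {x : ℝ} : x ∈ S.cyl [] ↔ x ∈ Icc (0 : ℝ) 1 := by
  simp [cyl, wordMap_nil]

lemma dist_le_of_mem_cyl {w : List (Fin S.k)} {x y : ℝ} (hx : x ∈ S.cyl w) (hy : y ∈ S.cyl w) :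
    |x - y| ≤ S.lam⁻¹ ^ w.length := by
  obtain ⟨a, ha, rfl⟩ := hx
  obtain ⟨b, hb, rfl⟩ := hy
  refine (S.wordMap_lip w ha hb).trans (mul_le_of_le_one_right ?_ ?_)
  · have := S.lam_pos
    positivity
  · rw [abs_le]; constructor <;> linarith [ha.1, ha.2, hb.1, hb.2]

lemma index_unique {i j : Fin S.k} {x : ℝ} (hi : x ∈ Icc (S.u i) (S.v i))
    (hj : x ∈ Icc (S.u j) (S.v j)) : i = j := by
  by_contra h
  exact Set.disjoint_left.1 (S.pair_disj h) hi hj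

lemma word_unique {w w' : List (Fin S.k)} {x : ℝ} (hl : w.length = w'.length)
    (h : x ∈ S.cyl w) (hx₂ : x ∈ S.cyl w') : w = w' := by
  induction w generalizing w' x with
  | nil => exact (List.length_eq_zero_iff.1 hl.symm).symm
  | cons j w ih =>
    cases w' with
    | nil => simp at hl
    | cons j' w' =>
      rw [mem_cyl_cons] at h hx₂
      rw [S.index_unique h.1 hx₂.1, ih (by simpa using hl) h.2 hx₂.2]

/-! ### Basic sets are cylinders -/

lemma mem_level_succ {n : ℕ} {x : ℝ} :
    x ∈ S.level (n + 1) ↔ x ∈ S.domain ∧ S.T x ∈ S.level n := by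
  constructor
  · intro h
    exact ⟨h 0 (by omega), fun m hm => by simpa using h (m + 1) (by omega)⟩
  · rintro ⟨h0, h⟩ m hm
    cases m with
    | zero => exact h0
    | succ m => simpa using h m (by omega)

/-- The restriction to `x ∈ [0,1]` matters only for `n = 0`, where `S.level 0` is all of `ℝ`. -/
lemma mem_level_iff {n : ℕ} {x : ℝ} (hx : x ∈ Icc (0 : ℝ) 1) :
    x ∈ S.level n ↔ ∃ w : List (Fin S.k), w.length = n ∧ x ∈ S.cyl w := by
  induction n generalizing x with
  | zero =>
    refine ⟨fun _ => ⟨[], rfl, S.mem_cyl_nil.2 hx⟩, fun _ m hm => by omega⟩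
  | succ n ih =>
    rw [mem_level_succ]
    constructor
    · rintro ⟨hd, h⟩
      obtain ⟨j, hj⟩ := mem_iUnion.1 hd
      obtain ⟨w, hw, hxw⟩ := (ih (S.T_mem hj)).1 h
      exact ⟨j :: w, by simp [hw], S.mem_cyl_cons.2 ⟨hj, hxw⟩⟩
    · rintro ⟨w, hw, hxw⟩
      cases w with
      | nil => simp at hw
      | cons j w =>
        rw [mem_cyl_cons] at hxw
        exact ⟨mem_iUnion.2 ⟨j, hxw.1⟩,
          (ih (S.T_mem hxw.1)).2 ⟨w, by simpa using hw, hxw.2⟩⟩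

lemma domain_subset_unit {x : ℝ} (hx : x ∈ S.domain) : x ∈ Icc (0 : ℝ) 1 := by
  obtain ⟨j, hj⟩ := mem_iUnion.1 hx
  exact S.subset_unit j hj

lemma level_eq {n : ℕ} (hn : 1 ≤ n) :
    S.level n = ⋃ w ∈ {w : List (Fin S.k) | w.length = n}, S.cyl w := by
  ext x
  simp only [mem_iUnion, mem_ofPred_eq, exists_prop]
  constructor
  · intro h
    exact (S.mem_level_iff (S.domain_subset_unit (h 0 (by omega)))).1 h
  · rintro ⟨w, hw, hx⟩
    exact (S.mem_level_iff (S.cyl_subset_unit w hx)).2 ⟨w, hw, hx⟩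

/-- A level is a finite disjoint union of closed cylinders, each of them connected, so the cylinders
are its components. -/
lemma connectedComponentIn_level {n : ℕ} (hn : 1 ≤ n) {w : List (Fin S.k)} (hw : w.length = n)
    {x : ℝ} (hx : x ∈ S.cyl w) : connectedComponentIn (S.level n) x = S.cyl w := by
  have hsub : S.cyl w ⊆ S.level n := by
    rw [S.level_eq hn]
    exact subset_biUnion_of_mem (u := S.cyl) hw
  refine Subset.antisymm ?_ ((S.isPreconnected_cyl w).subset_connectedComponentIn hx hsub)
  set B : Set ℝ := ⋃ w' ∈ {w' : List (Fin S.k) | w'.length = n ∧ w' ≠ w}, S.cyl w' with hB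
  have hfin : {w' : List (Fin S.k) | w'.length = n ∧ w' ≠ w}.Finite :=
    (List.finite_length_eq (Fin S.k) n).subset fun _ h => h.1
  have hBc : IsClosed B := hfin.isClosed_biUnion fun w' _ => (S.isCompact_cyl w').isClosed
  have hcov : connectedComponentIn (S.level n) x ⊆ S.cyl w ∪ B := by
    refine (connectedComponentIn_subset _ _).trans ?_
    rw [S.level_eq hn]
    refine iUnion₂_subset fun w' hw' => ?_
    by_cases h : w' = w
    · rw [h]; exact subset_union_left
    · exact (subset_biUnion_of_mem (u := S.cyl)
        (show w' ∈ {w' : List (Fin S.k) | w'.length = n ∧ w' ≠ w} from ⟨hw', h⟩)).trans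
        subset_union_right
  have hdisj : Disjoint (S.cyl w) B := by
    rw [Set.disjoint_left]
    intro y hy hyB
    simp only [hB, mem_iUnion, mem_ofPred_eq, exists_prop] at hyB
    obtain ⟨w', ⟨hl, hne⟩, hy'⟩ := hyB
    exact hne (S.word_unique (hl.trans hw.symm) hy' hy)
  rcases isPreconnected_iff_subset_of_disjoint_closed.1
    isPreconnected_connectedComponentIn _ _ (S.isCompact_cyl w).isClosed hBc hcov
    (by rw [hdisj.inter_eq, inter_empty]) with h | h
  · exact h
  · exact absurd (h (mem_connectedComponentIn (hsub hx))) (Set.disjoint_left.1 hdisj hx)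

lemma isBasic_iff {n : ℕ} (hn : 1 ≤ n) {I : Set ℝ} :
    S.IsBasic n I ↔ ∃ w : List (Fin S.k), w.length = n ∧ I = S.cyl w := by
  constructor
  · rintro ⟨x, hx, rfl⟩
    have hx' := hx
    rw [S.level_eq hn] at hx'
    simp only [mem_iUnion, mem_ofPred_eq, exists_prop] at hx'
    obtain ⟨w, hw, hxw⟩ := hx'
    exact ⟨w, hw, S.connectedComponentIn_level hn hw hxw⟩
  · rintro ⟨w, hw, rfl⟩
    obtain ⟨x, hx⟩ := S.cyl_nonempty w
    refine ⟨x, ?_, (S.connectedComponentIn_level hn hw hx).symm⟩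
    exact (S.mem_level_iff (S.cyl_subset_unit w hx)).2 ⟨w, hw, hx⟩

/-! ### Bounded distortion -/

/-- The distortion constant `exp (C / (1 - λ⁻ᵋ))`, uniform over all words. -/
noncomputable def distortion : ℝ := Real.exp (S.Ceps * (1 - S.lam⁻¹ ^ S.eps)⁻¹)

lemma ratio_nonneg : 0 ≤ S.lam⁻¹ ^ S.eps := Real.rpow_nonneg (inv_nonneg.2 S.lam_pos.le) _

lemma ratio_lt_one : S.lam⁻¹ ^ S.eps < 1 :=
  Real.rpow_lt_one (inv_nonneg.2 S.lam_pos.le) (inv_lt_one_of_one_lt₀ S.one_lt_lam) S.eps_pos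

lemma one_le_distortion : 1 ≤ S.distortion := by
  refine Real.one_le_exp (mul_nonneg S.Ceps_nonneg (inv_nonneg.2 ?_))
  linarith [S.ratio_lt_one]

/-- On a cylinder of length `n = w.length + 1`, of diameter at most `λ⁻ⁿ`, the Hölder condition and
`|T'| ≥ 1` bound the oscillation of `|T'|` by the factor `exp (C λ⁻ᵋⁿ)`. -/
lemma abs_T'_le {j : Fin S.k} {w : List (Fin S.k)} {c c' : ℝ} (hc : c ∈ S.cyl (j :: w))
    (hc' : c' ∈ S.cyl (j :: w)) :
    |S.T' c'| ≤ Real.exp (S.Ceps * (S.lam⁻¹ ^ S.eps) ^ (w.length + 1)) * |S.T' c| := by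
  have hd : c ∈ ⋃ j, Icc (S.u j) (S.v j) := mem_iUnion.2 ⟨j, (S.mem_cyl_cons.1 hc).1⟩
  have hd' : c' ∈ ⋃ j, Icc (S.u j) (S.v j) := mem_iUnion.2 ⟨j, (S.mem_cyl_cons.1 hc').1⟩
  have hlam : 0 ≤ S.lam⁻¹ := inv_nonneg.2 S.lam_pos.le
  have h1 : |c' - c| ^ S.eps ≤ (S.lam⁻¹ ^ S.eps) ^ (w.length + 1) := by
    rw [← Real.rpow_mul_natCast hlam, mul_comm, Real.rpow_mul hlam, Real.rpow_natCast]
    exact Real.rpow_le_rpow (abs_nonneg _)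
      (by simpa using S.dist_le_of_mem_cyl hc' hc) S.eps_pos.le
  have h2 := (S.holder c' hd' c hd).trans (mul_le_mul_of_nonneg_left h1 S.Ceps_nonneg)
  have h3 : 1 ≤ |S.T' c| := S.one_lt_lam.le.trans (S.expanding c hd)
  have h4 : |S.T' c'| ≤ |S.T' c| + |S.T' c' - S.T' c| := by
    have := abs_add_le (S.T' c) (S.T' c' - S.T' c)
    simpa using this
  set z := S.Ceps * (S.lam⁻¹ ^ S.eps) ^ (w.length + 1) with hz
  have hz0 : 0 ≤ z := mul_nonneg S.Ceps_nonneg (pow_nonneg S.ratio_nonneg _)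
  have h5 := Real.add_one_le_exp z
  calc |S.T' c'| ≤ |S.T' c| + z := by linarith
    _ ≤ (z + 1) * |S.T' c| := by nlinarith
    _ ≤ _ := by gcongr

/-- The difference quotients of `f_{jw}` and `f_w` differ by a value of `|T'|` on the cylinder of `jw`. -/
lemma exists_deriv {j : Fin S.k} {w : List (Fin S.k)} {s t : ℝ} (hs : s ∈ Icc (0 : ℝ) 1)
    (ht : t ∈ Icc (0 : ℝ) 1) :
    ∃ c ∈ S.cyl (j :: w), |S.wordMap w s - S.wordMap w t| =
      |S.T' c| * |S.wordMap (j :: w) s - S.wordMap (j :: w) t| := by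
  have hS := S.wordMap_mem w hs
  have hT := S.wordMap_mem w ht
  obtain ⟨c, hc, h⟩ := S.T_mvt j (S.branch_mem j hS) (S.branch_mem j hT)
  rw [S.T_branch j hS, S.T_branch j hT] at h
  refine ⟨c, (S.isPreconnected_cyl (j :: w)).ordConnected.uIcc_subset ?_ ?_ hc, ?_⟩
  · exact ⟨s, hs, rfl⟩
  · exact ⟨t, ht, rfl⟩
  · rw [h, abs_mul]; rfl

lemma wordMap_distortion_aux (w : List (Fin S.k)) {s t p q : ℝ} (hs : s ∈ Icc (0 : ℝ) 1)
    (ht : t ∈ Icc (0 : ℝ) 1) (hp : p ∈ Icc (0 : ℝ) 1) (hq : q ∈ Icc (0 : ℝ) 1) :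
    |S.wordMap w s - S.wordMap w t| * |p - q| ≤
      Real.exp (S.Ceps * ∑ i ∈ Finset.range (w.length + 1), (S.lam⁻¹ ^ S.eps) ^ i) *
        (|S.wordMap w p - S.wordMap w q| * |s - t|) := by
  induction w with
  | nil =>
    simp only [wordMap_nil]
    rw [mul_comm |p - q|]
    refine le_mul_of_one_le_left (by positivity) (Real.one_le_exp ?_)
    simpa using S.Ceps_nonneg
  | cons j w ih =>
    obtain ⟨c, hc, h⟩ := S.exists_deriv (j := j) (w := w) hs ht
    obtain ⟨c', hc', h'⟩ := S.exists_deriv (j := j) (w := w) hp hq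
    have hd : c ∈ ⋃ j, Icc (S.u j) (S.v j) := mem_iUnion.2 ⟨j, (S.mem_cyl_cons.1 hc).1⟩
    have hpos : 0 < |S.T' c| := S.lam_pos.trans_le (S.expanding c hd)
    have hle := S.abs_T'_le hc hc'
    rw [h, h'] at ih
    rw [List.length_cons, Finset.sum_range_succ, mul_add, Real.exp_add]
    set E := Real.exp (S.Ceps * ∑ i ∈ Finset.range (w.length + 1), (S.lam⁻¹ ^ S.eps) ^ i)
    set F := Real.exp (S.Ceps * (S.lam⁻¹ ^ S.eps) ^ (w.length + 1))
    set A := |S.wordMap (j :: w) s - S.wordMap (j :: w) t|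
    set B := |S.wordMap (j :: w) p - S.wordMap (j :: w) q|
    refine le_of_mul_le_mul_left ?_ hpos
    calc |S.T' c| * (A * |p - q|) = |S.T' c| * A * |p - q| := by ring
      _ ≤ E * (|S.T' c'| * B * |s - t|) := ih
      _ ≤ E * (F * |S.T' c| * B * |s - t|) := by gcongr
      _ = _ := by ring

/-- Bounded distortion: the difference quotients of `f_w` on `[0,1]` agree up to a factor
`S.distortion` not depending on `w`. Multiplied out so that no division is needed. -/
lemma wordMap_distortion (w : List (Fin S.k)) {s t p q : ℝ} (hs : s ∈ Icc (0 : ℝ) 1)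
    (ht : t ∈ Icc (0 : ℝ) 1) (hp : p ∈ Icc (0 : ℝ) 1) (hq : q ∈ Icc (0 : ℝ) 1) :
    |S.wordMap w s - S.wordMap w t| * |p - q| ≤
      S.distortion * (|S.wordMap w p - S.wordMap w q| * |s - t|) := by
  refine (S.wordMap_distortion_aux w hs ht hp hq).trans ?_
  refine mul_le_mul_of_nonneg_right (Real.exp_le_exp.2 ?_) (by positivity)
  refine mul_le_mul_of_nonneg_left ?_ S.Ceps_nonneg
  rw [← tsum_geometric_of_lt_one S.ratio_nonneg S.ratio_lt_one]
  exact (summable_geometric_of_lt_one S.ratio_nonneg S.ratio_lt_one).sum_le_tsum _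
    fun i _ => pow_nonneg S.ratio_nonneg i

/-! ### Sizes of cylinders -/

/-- The distance between the images of the endpoints of `[0,1]` under `f_w`. It is comparable to the
length of the cylinder, and bounded distortion makes it almost submultiplicative in `w`. -/
noncomputable def size (w : List (Fin S.k)) : ℝ := |S.wordMap w 0 - S.wordMap w 1|

lemma zero_mem' : (0 : ℝ) ∈ Icc (0 : ℝ) 1 := ⟨le_rfl, zero_le_one⟩

lemma one_mem' : (1 : ℝ) ∈ Icc (0 : ℝ) 1 := ⟨zero_le_one, le_rfl⟩

lemma size_nonneg (w : List (Fin S.k)) : 0 ≤ S.size w := abs_nonneg _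

lemma size_append_le (w v : List (Fin S.k)) :
    S.size (w ++ v) ≤ S.distortion * (S.size w * S.size v) := by
  have := S.wordMap_distortion w (S.wordMap_mem v zero_mem') (S.wordMap_mem v one_mem')
    zero_mem' one_mem'
  simpa [size, wordMap_append] using this

lemma size_le (w : List (Fin S.k)) : S.size w ≤ S.lam⁻¹ ^ w.length :=
  S.dist_le_of_mem_cyl ⟨0, zero_mem', rfl⟩ ⟨1, one_mem', rfl⟩

lemma setLen_eq_diam (w : List (Fin S.k)) : setLen (S.cyl w) = Metric.diam (S.cyl w) :=
  (Real.diam_eq (S.isCompact_cyl w).isBounded).symm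

lemma setLen_nonneg (w : List (Fin S.k)) : 0 ≤ setLen (S.cyl w) := by
  rw [setLen_eq_diam]; exact Metric.diam_nonneg

lemma setLen_le_pow (w : List (Fin S.k)) : setLen (S.cyl w) ≤ S.lam⁻¹ ^ w.length := by
  rw [setLen_eq_diam]
  refine Metric.diam_le_of_forall_dist_le (by have := S.lam_pos; positivity) ?_
  exact fun x hx y hy => S.dist_le_of_mem_cyl hx hy

lemma setLen_le_one (w : List (Fin S.k)) : setLen (S.cyl w) ≤ 1 :=
  (S.setLen_le_pow w).trans
    (pow_le_one₀ (inv_nonneg.2 S.lam_pos.le) (inv_le_one_of_one_le₀ S.one_lt_lam.le))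

lemma setLen_le_size (w : List (Fin S.k)) : setLen (S.cyl w) ≤ S.distortion * S.size w := by
  have hD := S.one_le_distortion
  have hs := S.size_nonneg w
  rw [setLen_eq_diam]
  refine Metric.diam_le_of_forall_dist_le (by positivity) ?_
  rintro _ ⟨a, ha, rfl⟩ _ ⟨b, hb, rfl⟩
  have h := S.wordMap_distortion w ha hb zero_mem' one_mem'
  have hab : |a - b| ≤ 1 := by
    rw [abs_le]; constructor <;> linarith [ha.1, ha.2, hb.1, hb.2]
  rw [Real.dist_eq]
  calc |S.wordMap w a - S.wordMap w b| ≤ S.distortion * (S.size w * |a - b|) := by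
        simpa [size] using h
    _ ≤ S.distortion * (S.size w * 1) := by gcongr
    _ = _ := by ring

lemma setLen_pos (w : List (Fin S.k)) : 0 < setLen (S.cyl w) := by
  have hinj : S.wordMap w 0 ≠ S.wordMap w 1 := by
    induction w with
    | nil => simp [wordMap_nil]
    | cons j w ih =>
      intro h
      rw [wordMap_cons, wordMap_cons] at h
      apply ih
      rw [← S.T_branch j (S.wordMap_mem w zero_mem'), h,
        S.T_branch j (S.wordMap_mem w one_mem')]
  rw [setLen_eq_diam]
  exact (dist_pos.2 hinj).trans_le (Metric.dist_le_diam_of_mem (S.isCompact_cyl w).isBounded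
    ⟨0, zero_mem', rfl⟩ ⟨1, one_mem', rfl⟩)

/-! ### Covering subsets of the repeller by one cylinder -/

lemma min_lt_max {i j : Fin S.k} (hij : i ≠ j) :
    min (S.v i) (S.v j) < max (S.u i) (S.u j) := by
  by_contra! h
  have hi : max (S.u i) (S.u j) ∈ Icc (S.u i) (S.v i) :=
    ⟨le_max_left _ _, h.trans (min_le_left _ _)⟩
  have hj : max (S.u i) (S.u j) ∈ Icc (S.u j) (S.v j) :=
    ⟨le_max_right _ _, h.trans (min_le_right _ _)⟩
  exact hij (S.index_unique hi hj)

lemma exists_gap : ∃ g : ℝ, 0 < g ∧ ∀ i j : Fin S.k, i ≠ j → ∀ x ∈ Icc (S.u i) (S.v i),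
    ∀ y ∈ Icc (S.u j) (S.v j), g ≤ |x - y| := by
  have hk := S.two_le_k
  have : Nonempty {p : Fin S.k × Fin S.k // p.1 ≠ p.2} :=
    ⟨⟨(⟨0, by omega⟩, ⟨1, by omega⟩), by simp⟩⟩
  obtain ⟨p, hp⟩ := Finite.exists_min fun p : {p : Fin S.k × Fin S.k // p.1 ≠ p.2} =>
    max (S.u p.1.1) (S.u p.1.2) - min (S.v p.1.1) (S.v p.1.2)
  refine ⟨_, ?_, fun i j hij x hx y hy => (hp ⟨(i, j), hij⟩).trans ?_⟩
  · have h := S.min_lt_max p.2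
    linarith
  · have h := S.min_lt_max hij
    simp only
    obtain ⟨hx1, hx2⟩ := hx
    obtain ⟨hy1, hy2⟩ := hy
    rcases max_cases (S.u i) (S.u j) with h1 | h1 <;>
    rcases min_cases (S.v i) (S.v j) with h2 | h2 <;>
    rw [h1.1, h2.1] at h ⊢ <;>
    rcases abs_cases (x - y) with h3 | h3 <;> linarith

lemma repeller_subset_unit {x : ℝ} (hx : x ∈ S.repeller) : x ∈ Icc (0 : ℝ) 1 :=
  S.domain_subset_unit (hx 0)

lemma T_mem_repeller {x : ℝ} (hx : x ∈ S.repeller) : S.T x ∈ S.repeller := fun n => by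
  simpa using hx (n + 1)

lemma exists_cyl_snoc {w : List (Fin S.k)} {x : ℝ} (hx : x ∈ S.repeller) (hw : x ∈ S.cyl w) :
    ∃ i, x ∈ S.cyl (w ++ [i]) := by
  induction w generalizing x with
  | nil =>
    obtain ⟨i, hi⟩ := mem_iUnion.1 (hx 0)
    exact ⟨i, S.mem_cyl_cons.2 ⟨hi, S.mem_cyl_nil.2 (S.T_mem hi)⟩⟩
  | cons j w ih =>
    rw [mem_cyl_cons] at hw
    obtain ⟨i, hi⟩ := ih (S.T_mem_repeller hx) hw.2
    exact ⟨i, S.mem_cyl_cons.2 ⟨hw.1, hi⟩⟩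

/-- Two distinct children of a cylinder are separated by a definite proportion of its size. -/
lemma size_le_of_ne {g : ℝ} (hg : 0 < g) (hgap : ∀ i j : Fin S.k, i ≠ j →
    ∀ x ∈ Icc (S.u i) (S.v i), ∀ y ∈ Icc (S.u j) (S.v j), g ≤ |x - y|)
    {w : List (Fin S.k)} {i j : Fin S.k} (hij : i ≠ j) {x y : ℝ}
    (hx : x ∈ S.cyl (w ++ [i])) (hy : y ∈ S.cyl (w ++ [j])) :
    S.size w ≤ S.distortion / g * |x - y| := by
  obtain ⟨a, ha, rfl⟩ := hx
  obtain ⟨b, hb, rfl⟩ := hy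
  have h1 := hgap i j hij _ (S.branch_mem i ha) _ (S.branch_mem j hb)
  have hi := S.subset_unit i (S.branch_mem i ha)
  have hj := S.subset_unit j (S.branch_mem j hb)
  have h2 := S.wordMap_distortion w zero_mem' one_mem' hi hj
  rw [wordMap_append, wordMap_append]
  change S.size w ≤ S.distortion / g * |S.wordMap w (S.branch i a) - S.wordMap w (S.branch j b)|
  rw [div_mul_eq_mul_div, le_div_iff₀ hg]
  calc S.size w * g ≤ S.size w * |S.branch i a - S.branch j b| := by
        have := S.size_nonneg w
        gcongr
    _ ≤ _ := by simpa [size] using h2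

/-- Descend from the root while some child of the current cylinder still contains `t ∩ Λ`. Either
depth `n` is reached, or `t` meets two children of the current cylinder, and then the size of that
cylinder is at most a constant times the distance of two points of `t`. -/
lemma exists_covering_word {g : ℝ} (hg : 0 < g) (hgap : ∀ i j : Fin S.k, i ≠ j →
    ∀ x ∈ Icc (S.u i) (S.v i), ∀ y ∈ Icc (S.u j) (S.v j), g ≤ |x - y|)
    (t : Set ℝ) (n : ℕ) :
    ∃ w : List (Fin S.k), t ∩ S.repeller ⊆ S.cyl w ∧
      (w.length = n ∨ ∃ x ∈ t, ∃ y ∈ t, S.size w ≤ S.distortion / g * |x - y|) := by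
  induction n with
  | zero =>
    exact ⟨[], fun x hx => S.mem_cyl_nil.2 (S.repeller_subset_unit hx.2), Or.inl rfl⟩
  | succ n ih =>
    obtain ⟨w, hw, h | h⟩ := ih
    swap
    · exact ⟨w, hw, Or.inr h⟩
    by_cases hex : ∃ i, t ∩ S.repeller ⊆ S.cyl (w ++ [i])
    · obtain ⟨i, hi⟩ := hex
      exact ⟨w ++ [i], hi, Or.inl (by simp [h])⟩
    refine ⟨w, hw, Or.inr ?_⟩
    push Not at hex
    have hk := S.two_le_k
    obtain ⟨x, hx, -⟩ := Set.not_subset.1 (hex ⟨0, by omega⟩)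
    obtain ⟨i, hi⟩ := S.exists_cyl_snoc hx.2 (hw hx)
    obtain ⟨y, hy, hyi⟩ := Set.not_subset.1 (hex i)
    obtain ⟨j, hj⟩ := S.exists_cyl_snoc hy.2 (hw hy)
    refine ⟨x, hx.1, y, hy.1, S.size_le_of_ne hg hgap ?_ hi hj⟩
    rintro rfl
    exact hyi hj

/-! ### Coding and compactness -/

/-- The prefix of length `n` of an infinite word. -/
def pre (ω : ℕ → Fin S.k) (n : ℕ) : List (Fin S.k) := List.ofFn fun i : Fin n => ω i

lemma length_pre (ω : ℕ → Fin S.k) (n : ℕ) : (S.pre ω n).length = n := by simp [pre]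

lemma pre_succ (ω : ℕ → Fin S.k) (n : ℕ) : S.pre ω (n + 1) = S.pre ω n ++ [ω n] := by
  unfold pre
  rw [List.ofFn_succ_last]
  simp

lemma cyl_append_subset (w v : List (Fin S.k)) : S.cyl (w ++ v) ⊆ S.cyl w := by
  rintro _ ⟨x, hx, rfl⟩
  exact ⟨S.wordMap v x, S.wordMap_mem v hx, (S.wordMap_append w v x).symm⟩

lemma mem_repeller_of_level {x : ℝ} (h : ∀ n, x ∈ S.level n) : x ∈ S.repeller :=
  fun n => h (n + 1) n (by omega)

/-- Every infinite word is the itinerary of some point of the repeller. -/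
lemma exists_coded (ω : ℕ → Fin S.k) : ∃ x ∈ S.repeller, ∀ n, x ∈ S.cyl (S.pre ω n) := by
  obtain ⟨x, hx⟩ := IsCompact.nonempty_iInter_of_sequence_nonempty_isCompact_isClosed
    (fun n => S.cyl (S.pre ω n))
    (fun n => by rw [pre_succ]; exact S.cyl_append_subset _ _)
    (fun n => S.cyl_nonempty _) (S.isCompact_cyl _) (fun n => (S.isCompact_cyl _).isClosed)
  rw [mem_iInter] at hx
  refine ⟨x, S.mem_repeller_of_level fun n => ?_, hx⟩
  exact (S.mem_level_iff (S.cyl_subset_unit _ (hx n))).2 ⟨_, S.length_pre ω n, hx n⟩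

lemma isOpen_pre_eq (w : List (Fin S.k)) :
    IsOpen {ω : ℕ → Fin S.k | S.pre ω w.length = w} := by
  have hc : Continuous fun (ω : ℕ → Fin S.k) (i : Fin w.length) => ω i :=
    continuous_pi fun i => continuous_apply _
  exact (isOpen_discrete {f : Fin w.length → Fin S.k | List.ofFn f = w}).preimage hc

/-- If cylinders `W n` cover the repeller, compactness of the space of infinite words gives finitely
many of them such that every sufficiently long word starts with one. -/
lemma exists_finite_cut (t : ℕ → Set ℝ) (ht : S.repeller ⊆ ⋃ n, t n)
    (W : ℕ → List (Fin S.k)) (hW : ∀ n, t n ∩ S.repeller ⊆ S.cyl (W n)) :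
    ∃ (J : Finset ℕ) (N : ℕ), ∀ u : List (Fin S.k), N ≤ u.length →
      ∃ n ∈ J, ∃ v, u = W n ++ v := by
  obtain ⟨J, hJ⟩ := isCompact_univ.elim_finite_subcover
    (fun n => {ω : ℕ → Fin S.k | S.pre ω (W n).length = W n}) (fun n => S.isOpen_pre_eq (W n))
    (by
      intro ω _
      obtain ⟨x, hx, hxω⟩ := S.exists_coded ω
      obtain ⟨n, hn⟩ := mem_iUnion.1 (ht hx)
      exact mem_iUnion.2 ⟨n, S.word_unique (S.length_pre ω _) (hxω _) (hW n ⟨hn, hx⟩)⟩)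
  refine ⟨J, J.sup fun n => (W n).length, fun u hu => ?_⟩
  have hk := S.two_le_k
  have h := hJ (mem_univ fun i => u.getD i ⟨0, by omega⟩)
  simp only [mem_iUnion, exists_prop] at h
  obtain ⟨n, hn, hω⟩ := h
  refine ⟨n, hn, u.drop (W n).length, ?_⟩
  have hlen : (W n).length ≤ u.length :=
    (Finset.le_sup (f := fun n => (W n).length) hn).trans hu
  have htake : u.take (W n).length = W n := by
    refine Eq.trans ?_ hω
    apply List.ext_getElem
    · simp [pre, hlen]
    · intro i h1 h2
      have hi : i < u.length := by simp at h1; omega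
      simp [pre, hi]
  conv_lhs => rw [← List.take_append_drop (W n).length u, htake]

/-! ### Submultiplicative weights on words -/

/-- A submultiplicative weight on words is summable as soon as some finite set of words of total
weight at most `1/2` provides a prefix for every long word: if `Z_n` is the sum over words of length
at most `n`, splitting off such a prefix gives `Z_n ≤ Z_N + Z_n / 2`. -/
lemma summable_of_cut {α : Type*} [Finite α] (a : List α → ℝ) (ha : ∀ w, 0 ≤ a w)
    (hmul : ∀ w v, a (w ++ v) ≤ a w * a v) (J : Finset ℕ) (W : ℕ → List α) (N : ℕ)
    (hJ : ∀ u : List α, N ≤ u.length → ∃ n ∈ J, ∃ v, u = W n ++ v)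
    (hsum : ∑ n ∈ J, a (W n) ≤ 1 / 2) : Summable a := by
  classical
  let B : ℕ → Finset (List α) := fun n => (List.finite_length_le α n).toFinset
  have hB : ∀ n (u : List α), u ∈ B n ↔ u.length ≤ n := fun n u => by simp [B]
  have hbound : ∀ n, ∑ u ∈ B n, a u ≤ 2 * ∑ u ∈ B N, a u := by
    intro n
    have hsub : B n ⊆ B N ∪ (J ×ˢ B n).image fun p => W p.1 ++ p.2 := by
      intro u hu
      rw [hB] at hu
      rw [Finset.mem_union]
      rcases le_total u.length N with h | h
      · exact Or.inl ((hB _ _).2 h)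
      · obtain ⟨m, hm, v, rfl⟩ := hJ u h
        refine Or.inr (Finset.mem_image.2 ⟨(m, v), Finset.mem_product.2 ⟨hm, (hB _ _).2 ?_⟩, rfl⟩)
        simp at hu ⊢
        omega
    have h1 : ∑ u ∈ (J ×ˢ B n).image (fun p => W p.1 ++ p.2), a u ≤
        1 / 2 * ∑ u ∈ B n, a u := by
      calc _ ≤ ∑ p ∈ J ×ˢ B n, a (W p.1 ++ p.2) :=
            Finset.sum_image_le_of_nonneg fun _ _ => ha _
        _ ≤ ∑ p ∈ J ×ˢ B n, a (W p.1) * a p.2 := Finset.sum_le_sum fun _ _ => hmul _ _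
        _ = (∑ m ∈ J, a (W m)) * ∑ u ∈ B n, a u := by
            rw [Finset.sum_mul_sum, Finset.sum_product]
        _ ≤ _ := mul_le_mul_of_nonneg_right hsum (Finset.sum_nonneg fun _ _ => ha _)
    have h2 : ∑ u ∈ B n, a u ≤ ∑ u ∈ B N, a u +
        ∑ u ∈ (J ×ˢ B n).image (fun p => W p.1 ++ p.2), a u := by
      refine (Finset.sum_le_sum_of_subset_of_nonneg hsub fun _ _ _ => ha _).trans ?_
      rw [← Finset.sum_union_inter]
      exact le_add_of_nonneg_right (Finset.sum_nonneg fun _ _ => ha _)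
    linarith
  refine summable_of_sum_le ha (c := 2 * ∑ u ∈ B N, a u) fun s => ?_
  refine (Finset.sum_le_sum_of_subset_of_nonneg ?_ fun _ _ _ => ha _).trans
    (hbound (s.sup List.length))
  exact fun u hu => (hB _ _).2 (Finset.le_sup (f := List.length) hu)

/-! ### Passing from basic sets to words -/

lemma ediam_cyl (w : List (Fin S.k)) :
    Metric.ediam (S.cyl w) = ENNReal.ofReal (setLen (S.cyl w)) := by
  rw [setLen_eq_diam, Metric.diam, ENNReal.ofReal_toReal]
  exact (S.isCompact_cyl w).isBounded.ediam_ne_top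

/-- Words of length `n ≥ 1` correspond bijectively to basic sets of level `n`, and the empty word does
not affect summability. -/
lemma summable_basic_iff (σ : ℝ) :
    Summable (fun p : {p : ℕ × Set ℝ // 1 ≤ p.1 ∧ S.IsBasic p.1 p.2} => setLen p.1.2 ^ σ) ↔
      Summable fun w : List (Fin S.k) => setLen (S.cyl w) ^ σ := by
  classical
  have hlen : ∀ w : {w : List (Fin S.k) // w ∉ ({[]} : Finset (List (Fin S.k)))},
      1 ≤ w.1.length := fun w => by
    have := w.2
    rw [Finset.mem_singleton] at this
    exact List.length_pos_iff.2 this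
  let e : {w : List (Fin S.k) // w ∉ ({[]} : Finset (List (Fin S.k)))} →
      {p : ℕ × Set ℝ // 1 ≤ p.1 ∧ S.IsBasic p.1 p.2} :=
    fun w => ⟨(w.1.length, S.cyl w.1), hlen w, (S.isBasic_iff (hlen w)).2 ⟨w.1, rfl, rfl⟩⟩
  have he : Function.Bijective e := by
    constructor
    · intro w w' h
      have h' := Prod.ext_iff.1 (Subtype.ext_iff.1 h)
      obtain ⟨x, hx⟩ := S.cyl_nonempty w.1
      refine Subtype.ext (S.word_unique h'.1 hx ?_)
      have h2 : S.cyl w.1 = S.cyl w'.1 := h'.2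
      exact h2 ▸ hx
    · rintro ⟨⟨n, I⟩, hn, hI⟩
      obtain ⟨w, rfl, rfl⟩ := (S.isBasic_iff hn).1 hI
      exact ⟨⟨w, by rw [Finset.mem_singleton]; exact List.length_pos_iff.1 hn⟩, rfl⟩
  rw [← (Equiv.ofBijective e he).summable_iff,
    ← Finset.summable_compl_iff ({[]} : Finset (List (Fin S.k)))]
  rfl

/-! ### Divergence below the dimension -/

lemma repeller_subset_iUnion_cyl (n : ℕ) :
    S.repeller ⊆ ⋃ w : {w : List (Fin S.k) // w.length = n}, S.cyl w.1 := by
  intro x hx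
  obtain ⟨w, hw, hxw⟩ := (S.mem_level_iff (n := n) (S.repeller_subset_unit hx)).1
    fun m _ => hx m
  exact mem_iUnion.2 ⟨⟨w, hw⟩, hxw⟩

/-- The cylinders of length `n` cover the repeller with diameters tending to `0`, so a convergent series
bounds the `σ`-dimensional Hausdorff measure. -/
lemma dimH_le_of_summable {σ : ℝ} (hσ : 0 ≤ σ)
    (h : Summable fun w : List (Fin S.k) => setLen (S.cyl w) ^ σ) :
    (dimH S.repeller).toReal ≤ σ := by
  have hlam : 0 ≤ S.lam⁻¹ := inv_nonneg.2 S.lam_pos.le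
  set M : ENNReal := ∑' w : List (Fin S.k), ENNReal.ofReal (setLen (S.cyl w) ^ σ) with hM
  have hMtop : M ≠ ⊤ := h.tsum_ofReal_ne_top
  have hr : Filter.Tendsto (fun n : ℕ => ENNReal.ofReal (S.lam⁻¹ ^ n)) Filter.atTop (nhds 0) := by
    rw [← ENNReal.ofReal_zero]
    exact ENNReal.tendsto_ofReal
      (tendsto_pow_atTop_nhds_zero_of_lt_one hlam (inv_lt_one_of_one_lt₀ S.one_lt_lam))
  have hle := Measure.hausdorffMeasure_le_liminf_tsum
    (ι := fun n : ℕ => {w : List (Fin S.k) // w.length = n}) σ S.repeller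
    (fun n : ℕ => ENNReal.ofReal (S.lam⁻¹ ^ n)) hr (fun n w => S.cyl w.1)
    (Filter.Eventually.of_forall fun n w => by
      rw [ediam_cyl]
      have hw := S.setLen_le_pow w.1
      rw [w.2] at hw
      exact ENNReal.ofReal_le_ofReal hw)
    (Filter.Eventually.of_forall fun n => S.repeller_subset_iUnion_cyl n)
  have hbd : ∀ n : ℕ, ∑' w : {w : List (Fin S.k) // w.length = n},
      Metric.ediam (S.cyl w.1) ^ σ ≤ M := by
    intro n
    simp only [ediam_cyl, ENNReal.ofReal_rpow_of_nonneg (S.setLen_nonneg _) hσ]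
    exact ENNReal.tsum_comp_le_tsum_of_injective Subtype.val_injective
      fun w : List (Fin S.k) => ENNReal.ofReal (setLen (S.cyl w) ^ σ)
  have hfin : Measure.hausdorffMeasure σ S.repeller ≤ M :=
    hle.trans ((Filter.liminf_le_liminf (Filter.Eventually.of_forall hbd)).trans
      (Filter.liminf_const M).le)
  lift σ to NNReal using hσ
  have := dimH_le_of_hausdorffMeasure_ne_top (ne_top_of_le_ne_top hMtop hfin)
  simpa using ENNReal.toReal_mono ENNReal.coe_ne_top this

lemma not_summable_of_nonpos {σ : ℝ} (hσ : σ ≤ 0) :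
    ¬ Summable fun w : List (Fin S.k) => setLen (S.cyl w) ^ σ := by
  intro h
  have hk := S.two_le_k
  have : Nonempty (Fin S.k) := ⟨⟨0, by omega⟩⟩
  have h1 : Summable fun _ : List (Fin S.k) => (1 : ℝ) :=
    h.of_nonneg_of_le (fun _ => zero_le_one) fun w =>
      Real.one_le_rpow_of_pos_of_le_one_of_nonpos (S.setLen_pos w) (S.setLen_le_one w) hσ
  rw [summable_const_iff] at h1
  exact one_ne_zero h1

/-! ### Convergence above the dimension -/

/-- A multiple of `size w ^ σ`; the factor `S.distortion ^ σ` makes it submultiplicative. -/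
noncomputable def weight (σ : ℝ) (w : List (Fin S.k)) : ℝ := (S.distortion * S.size w) ^ σ

lemma distortion_mul_size_nonneg (w : List (Fin S.k)) : 0 ≤ S.distortion * S.size w :=
  mul_nonneg (zero_le_one.trans S.one_le_distortion) (S.size_nonneg w)

lemma weight_nonneg (σ : ℝ) (w : List (Fin S.k)) : 0 ≤ S.weight σ w :=
  Real.rpow_nonneg (S.distortion_mul_size_nonneg w) σ

lemma weight_append_le {σ : ℝ} (hσ : 0 ≤ σ) (w v : List (Fin S.k)) :
    S.weight σ (w ++ v) ≤ S.weight σ w * S.weight σ v := by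
  unfold weight
  rw [← Real.mul_rpow (S.distortion_mul_size_nonneg w) (S.distortion_mul_size_nonneg v)]
  refine Real.rpow_le_rpow (S.distortion_mul_size_nonneg _) ?_ hσ
  have h0 : 0 ≤ S.distortion := zero_le_one.trans S.one_le_distortion
  calc S.distortion * S.size (w ++ v) ≤ S.distortion * (S.distortion * (S.size w * S.size v)) :=
        mul_le_mul_of_nonneg_left (S.size_append_le w v) h0
    _ = _ := by ring

lemma exists_depth {σ : ℝ} (hσ : 0 < σ) {e : ℝ} (he : 0 < e) :
    ∃ n : ℕ, ∀ w : List (Fin S.k), w.length = n → S.weight σ w ≤ e := by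
  have hlam : 0 ≤ S.lam⁻¹ := inv_nonneg.2 S.lam_pos.le
  have h0 : 0 ≤ S.distortion := zero_le_one.trans S.one_le_distortion
  have ht : Filter.Tendsto (fun n : ℕ => (S.distortion * S.lam⁻¹ ^ n) ^ σ) Filter.atTop
      (nhds 0) := by
    have := ((tendsto_pow_atTop_nhds_zero_of_lt_one hlam
      (inv_lt_one_of_one_lt₀ S.one_lt_lam)).const_mul S.distortion).rpow_const
      (p := σ) (Or.inr hσ.le)
    simpa [Real.zero_rpow hσ.ne'] using this
  obtain ⟨n, hn⟩ := (ht.eventually_le_const he).exists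
  refine ⟨n, fun w hw => le_trans ?_ hn⟩
  refine Real.rpow_le_rpow (S.distortion_mul_size_nonneg w) ?_ hσ.le
  exact mul_le_mul_of_nonneg_left (hw ▸ S.size_le w) h0

/-- The error `e` takes care of sets `t` that meet the repeller in at most one point, for which no
cylinder has size controlled by `diam t`. -/
lemma exists_covering_word_weight {σ : ℝ} (hσ : 0 < σ) :
    ∃ K : ℝ, 0 < K ∧ ∀ (t : Set ℝ) (e : NNReal), 0 < e →
      ∃ w : List (Fin S.k), t ∩ S.repeller ⊆ S.cyl w ∧
        ENNReal.ofReal (S.weight σ w) ≤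
          ENNReal.ofReal K * (⨆ _ : t.Nonempty, Metric.ediam t ^ σ) + e := by
  obtain ⟨g, hg, hgap⟩ := S.exists_gap
  have hD : 0 < S.distortion := zero_lt_one.trans_le S.one_le_distortion
  have hK0 : 0 < S.distortion * (S.distortion / g) := by positivity
  refine ⟨(S.distortion * (S.distortion / g)) ^ σ, Real.rpow_pos_of_pos hK0 _, ?_⟩
  intro t e he
  obtain ⟨n, hn⟩ := S.exists_depth hσ (e := e) (by exact_mod_cast he)
  obtain ⟨w, hw, h | ⟨x, hx, y, hy, h⟩⟩ := S.exists_covering_word hg hgap t n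
  · refine ⟨w, hw, le_add_left ?_⟩
    rw [← ENNReal.ofReal_coe_nnreal]
    exact ENNReal.ofReal_le_ofReal (hn w h)
  · refine ⟨w, hw, le_add_right ?_⟩
    have h1 : S.weight σ w ≤ (S.distortion * (S.distortion / g)) ^ σ * |x - y| ^ σ := by
      rw [← Real.mul_rpow hK0.le (abs_nonneg _)]
      refine Real.rpow_le_rpow (S.distortion_mul_size_nonneg w) ?_ hσ.le
      rw [mul_assoc]
      exact mul_le_mul_of_nonneg_left h hD.le
    refine (ENNReal.ofReal_le_ofReal h1).trans ?_
    rw [ENNReal.ofReal_mul (Real.rpow_nonneg hK0.le _),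
      ← ENNReal.ofReal_rpow_of_nonneg (abs_nonneg (x - y)) hσ.le, ← Real.dist_eq, ← edist_dist]
    refine mul_le_mul_right ?_ _
    refine le_trans ?_ (le_iSup (fun _ : t.Nonempty => Metric.ediam t ^ σ) ⟨x, hx⟩)
    exact ENNReal.rpow_le_rpow (Metric.edist_le_ediam_of_mem hx hy) hσ.le

/-- Since the `σ`-dimensional Hausdorff measure vanishes, the repeller has covers of arbitrarily small
`σ`-sum; replacing each set by a cylinder yields the finite cut of weight at most `1/2` required by
`summable_of_cut`. -/
lemma summable_of_dimH_lt {σ : ℝ} (h : (dimH S.repeller).toReal < σ) :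
    Summable fun w : List (Fin S.k) => setLen (S.cyl w) ^ σ := by
  have hσ : 0 < σ := ENNReal.toReal_nonneg.trans_lt h
  have htop : dimH S.repeller ≠ ⊤ :=
    ne_top_of_le_ne_top ENNReal.one_ne_top ((dimH_mono (subset_univ _)).trans Real.dimH_univ.le)
  have hzero : Measure.hausdorffMeasure σ S.repeller = 0 := by
    have := hausdorffMeasure_of_dimH_lt (d := σ.toNNReal)
      ((ENNReal.lt_ofReal_iff_toReal_lt htop).2 h)
    rwa [Real.coe_toNNReal σ hσ.le] at this
  obtain ⟨K, hK, hcov⟩ := S.exists_covering_word_weight hσ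
  have hKpos : ENNReal.ofReal K ≠ 0 := (ENNReal.ofReal_pos.2 hK).ne'
  obtain ⟨e, he0, he⟩ := ENNReal.exists_pos_sum_of_countable
    (ε := ENNReal.ofReal (1 / 4)) (by simp) ℕ
  have hη : 0 < ENNReal.ofReal (1 / 4) / ENNReal.ofReal K :=
    ENNReal.div_pos (by simp) ENNReal.ofReal_ne_top
  obtain ⟨t, ht, htsum⟩ : ∃ t : ℕ → Set ℝ, S.repeller ⊆ ⋃ n, t n ∧
      ∑' n, (⨆ _ : (t n).Nonempty, Metric.ediam (t n) ^ σ) <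
        ENNReal.ofReal (1 / 4) / ENNReal.ofReal K := by
    rw [Measure.hausdorffMeasure_apply] at hzero
    have h1 := (le_iSup₂ (f := fun (r : ENNReal) (_ : 0 < r) =>
      ⨅ (t : ℕ → Set ℝ) (_ : S.repeller ⊆ ⋃ n, t n) (_ : ∀ n, Metric.ediam (t n) ≤ r),
        ∑' n, ⨆ _ : (t n).Nonempty, Metric.ediam (t n) ^ σ) 1 one_pos).trans hzero.le
    have h2 := h1.trans_lt hη
    simp only [iInf_lt_iff] at h2
    obtain ⟨t, ht, _, hs⟩ := h2
    exact ⟨t, ht, hs⟩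
  choose W hW hWw using fun n => hcov (t n) (e n) (he0 n)
  obtain ⟨J, N, hJ⟩ := S.exists_finite_cut t ht W hW
  have hsum : ∑ n ∈ J, S.weight σ (W n) ≤ 1 / 2 := by
    rw [← ENNReal.ofReal_le_ofReal_iff (by norm_num),
      ENNReal.ofReal_sum_of_nonneg fun _ _ => S.weight_nonneg σ _]
    calc ∑ n ∈ J, ENNReal.ofReal (S.weight σ (W n))
        ≤ ∑' n, ENNReal.ofReal (S.weight σ (W n)) := ENNReal.sum_le_tsum J
      _ ≤ ∑' n, (ENNReal.ofReal K * (⨆ _ : (t n).Nonempty, Metric.ediam (t n) ^ σ) + e n) :=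
          ENNReal.tsum_le_tsum hWw
      _ = ENNReal.ofReal K * ∑' n, (⨆ _ : (t n).Nonempty, Metric.ediam (t n) ^ σ) +
            ∑' n, (e n : ENNReal) := by rw [ENNReal.tsum_add, ENNReal.tsum_mul_left]
      _ ≤ ENNReal.ofReal (1 / 4) + ENNReal.ofReal (1 / 4) := by
          refine add_le_add ?_ he.le
          rw [mul_comm]
          exact (ENNReal.mul_lt_of_lt_div htsum).le
      _ = ENNReal.ofReal (1 / 2) := by
          rw [← ENNReal.ofReal_add (by norm_num) (by norm_num)]
          norm_num
  have hsummable := summable_of_cut (S.weight σ) (S.weight_nonneg σ) (S.weight_append_le hσ.le)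
    J W N hJ hsum
  exact hsummable.of_nonneg_of_le (fun w => Real.rpow_nonneg (S.setLen_nonneg w) σ)
    fun w => Real.rpow_le_rpow (S.setLen_nonneg w) (S.setLen_le_size w) hσ.le

end CookieCutter

/-- The abscissa of convergence of `Σ_{n≥1} Σ_i |I_n^i|^s` is the Hausdorff
dimension of the repeller: the series converges for `σ > dim_H Λ` and diverges
for `σ < dim_H Λ`. -/
theorem abscissa_of_geometric_series_eq_dimH (S : CookieCutter) :
    (∀ σ : ℝ, (dimH S.repeller).toReal < σ →
      Summable (fun p : {p : ℕ × Set ℝ // 1 ≤ p.1 ∧ S.IsBasic p.1 p.2} =>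
        setLen p.1.2 ^ σ)) ∧
    (∀ σ : ℝ, σ < (dimH S.repeller).toReal →
      ¬ Summable (fun p : {p : ℕ × Set ℝ // 1 ≤ p.1 ∧ S.IsBasic p.1 p.2} =>
        setLen p.1.2 ^ σ)) := by
  refine ⟨fun σ hσ => ?_, fun σ hσ h => ?_⟩
  · exact (S.summable_basic_iff σ).2 (S.summable_of_dimH_lt hσ)
  · rw [S.summable_basic_iff σ] at h
    rcases le_total σ 0 with h0 | h0
    · exact S.not_summable_of_nonpos h0 h
    · exact absurd (S.dimH_le_of_summable h0 h) (not_le.2 hσ)
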